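/- Let k ≥ 1 be an integer. If s = 4k or s = -4k+2 (with s ∉ {0,1,2}), then γ̄(ℤ, {1,2,s}) = 2k/(8k-2). If s = 4k+1 or s = -4k+1, then γ̄(ℤ, {1,2,s}) = (k+1)/(4k+2). If s = 4k+2 or s = -4k, then γ̄(ℤ, {1,2,s}) = (k+1)/(4k+3). -/

import Mathlib

open Filter

/-- Lower density of a set of integers. -/
noncomputable def lowerDensity (D : Set ℤ) : ℝ :=
  Filter.liminf (fun n : ℕ =>
    ((D ∩ Set.Icc (-(n : ℤ)) (n : ℤ)).ncard : ℝ) / (2 * (n : ℝ) + 1)) Filter.atTop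

/-- `D` is a dominating set of the integer distance digraph `Γ(ℤ,S)`. -/
def Dominating (S D : Set ℤ) : Prop :=
  ∀ m : ℤ, m ∈ D ∨ ∃ u ∈ D, ∃ s ∈ S, m = u + s

/-- Domination ratio of `Γ(ℤ,S)`. -/
noncomputable def dominationRatio (S : Set ℤ) : ℝ :=
  sInf (lowerDensity '' {D : Set ℤ | Dominating S D})

/-- `D` is an efficient dominating set of `Γ(ℤ,S)`: every integer is dominated
by exactly one element of `D`. -/
def EffDominating (S D : Set ℤ) : Prop :=
  ∀ m : ℤ, ∃! u, u ∈ D ∧ (u = m ∨ m - u ∈ S)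

/-!
Fix a dominating set `D` and call a window of length `L` deficient when it contains fewer than `q`
elements of `D`. Counting how often the elements of a window starting at `n` are dominated, by the
elements near them and by those in the window starting at `n - s`, bounds below three times the
surplus of the former over `q` plus the surplus of the latter. So a deficit at `n` forces a surplus
at `n - s`, which pays for it, and averaging over all windows gives density at least `q / L`. For
`s = 4 * k` the payment comes from `n - s + 1` instead.

For `s = 4 * k + 1` a deficit of one may remain unpaid, but only if `D` has a rigid pattern around
its window. Between two such windows some surplus is left over, so the unpaid deficits do not
accumulate.

Periodic sets built from progressions of difference `4` attain the bounds, and the reflection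
`t ↦ 2 - t` of the closed out-neighbourhood exchanges `s` and `2 - s`.
-/

section LowerDensity

theorem tendsto_const_add_const_div_two_mul_add_one (v C : ℝ) :
    Tendsto (fun n : ℕ => v + C / (2 * (n : ℝ) + 1)) atTop (nhds v) := by
  have h : Tendsto (fun n : ℕ => 2 * (n : ℝ) + 1) atTop atTop :=
    tendsto_atTop_add_const_right _ _ (tendsto_natCast_atTop_atTop.const_mul_atTop two_pos)
  simpa using tendsto_const_nhds.add (h.const_div_atTop C)

theorem ncard_inter_Icc_le (D : Set ℤ) (n : ℕ) :
    (D ∩ Set.Icc (-(n : ℤ)) n).ncard ≤ 2 * n + 1 := by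
  have h := Set.ncard_le_ncard (Set.inter_subset_right (s := D)) (Set.finite_Icc (-(n : ℤ)) n)
  have hcard : (Set.Icc (-(n : ℤ)) n).ncard = 2 * n + 1 := by
    rw [← Finset.coe_Icc, Set.ncard_coe_finset, Int.card_Icc]
    omega
  exact h.trans_eq hcard

theorem le_lowerDensity {D : Set ℤ} {v C : ℝ}
    (h : ∀ n : ℕ, v * (2 * (n : ℝ) + 1) ≤ (D ∩ Set.Icc (-(n : ℤ)) n).ncard + C) :
    v ≤ lowerDensity D := by
  have hlim := tendsto_const_add_const_div_two_mul_add_one v (-C)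
  have hbdd : ∀ n : ℕ, ((D ∩ Set.Icc (-(n : ℤ)) n).ncard : ℝ) / (2 * (n : ℝ) + 1) ≤ 1 :=
    fun n => (div_le_one (by positivity)).2 (by exact_mod_cast ncard_inter_Icc_le D n)
  rw [← hlim.liminf_eq]
  refine liminf_le_liminf (Eventually.of_forall fun n => ?_) hlim.isBoundedUnder_ge
    (isBoundedUnder_of ⟨1, hbdd⟩).isCoboundedUnder_ge
  have hn : 0 < 2 * (n : ℝ) + 1 := by positivity
  rw [le_div_iff₀ hn, add_mul, div_mul_cancel₀ _ hn.ne']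
  linarith [h n]

theorem lowerDensity_le {D : Set ℤ} {v C : ℝ}
    (h : ∀ n : ℕ, ((D ∩ Set.Icc (-(n : ℤ)) n).ncard : ℝ) ≤ v * (2 * (n : ℝ) + 1) + C) :
    lowerDensity D ≤ v := by
  have hlim := tendsto_const_add_const_div_two_mul_add_one v C
  rw [← hlim.liminf_eq]
  refine liminf_le_liminf (Eventually.of_forall fun n => ?_)
    (isBoundedUnder_of ⟨0, fun n => by positivity⟩) hlim.isBoundedUnder_le.isCoboundedUnder_ge
  have hn : 0 < 2 * (n : ℝ) + 1 := by positivity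
  rw [div_le_iff₀ hn, add_mul, div_mul_cancel₀ _ hn.ne']
  exact h n

theorem lowerDensity_nonneg (D : Set ℤ) : 0 ≤ lowerDensity D :=
  le_lowerDensity (C := 0) fun n => by simp

theorem lowerDensity_neg (D : Set ℤ) : lowerDensity (Neg.neg '' D) = lowerDensity D := by
  have h (n : ℕ) : Neg.neg '' D ∩ Set.Icc (-(n : ℤ)) n =
      Neg.neg '' (D ∩ Set.Icc (-(n : ℤ)) n) := by
    rw [Set.image_inter neg_injective]
    simp
  simp only [lowerDensity, h, Set.ncard_image_of_injective _ neg_injective]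

end LowerDensity

section DominationRatio

variable {S T : Set ℤ} {v : ℝ}

theorem dominating_iff {D : Set ℤ} :
    Dominating S D ↔ ∀ m, ∃ u ∈ D, m - u ∈ insert 0 S := by
  refine forall_congr' fun m => ⟨?_, ?_⟩
  · rintro (hm | ⟨u, hu, t, ht, rfl⟩)
    · exact ⟨m, hm, by simp⟩
    · exact ⟨u, hu, by simp [ht]⟩
  · rintro ⟨u, hu, hm | hm⟩
    · exact .inl (sub_eq_zero.1 hm ▸ hu)
    · exact .inr ⟨u, hu, _, hm, by ring⟩

theorem dominationRatio_le {D : Set ℤ} (hD : Dominating S D) (h : lowerDensity D ≤ v) :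
    dominationRatio S ≤ v := by
  refine (csInf_le ⟨0, ?_⟩ (Set.mem_image_of_mem _ hD)).trans h
  rintro _ ⟨E, -, rfl⟩
  exact lowerDensity_nonneg E

theorem le_dominationRatio (h : ∀ D, Dominating S D → v ≤ lowerDensity D) :
    v ≤ dominationRatio S := by
  refine le_csInf ⟨_, Set.univ, fun _ => .inl trivial, rfl⟩ ?_
  rintro _ ⟨D, hD, rfl⟩
  exact h D hD

theorem Dominating.neg_of_reflect {D : Set ℤ} {c : ℤ} (hD : Dominating S D)
    (h : ∀ t, c - t ∈ insert 0 S → t ∈ insert 0 T) : Dominating T (Neg.neg '' D) := by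
  rw [dominating_iff] at hD ⊢
  intro m
  obtain ⟨u, hu, hm⟩ := hD (c - m)
  exact ⟨-u, ⟨u, hu, rfl⟩, h _ (by rwa [sub_neg_eq_add, ← sub_sub])⟩

theorem dominationRatio_eq_of_reflect {c : ℤ}
    (h : ∀ t, t ∈ insert 0 T ↔ c - t ∈ insert 0 S) : dominationRatio T = dominationRatio S := by
  refine le_antisymm (le_dominationRatio fun D hD => ?_) (le_dominationRatio fun D hD => ?_)
  · exact dominationRatio_le (hD.neg_of_reflect fun t => (h t).2) (lowerDensity_neg D).le
  · refine dominationRatio_le (hD.neg_of_reflect (c := c) fun t ht => ?_) (lowerDensity_neg D).le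
    simpa using (h _).1 ht

theorem dominationRatio_two_sub (s : ℤ) :
    dominationRatio {1, 2, 2 - s} = dominationRatio {1, 2, s} := by
  refine dominationRatio_eq_of_reflect (c := 2) fun t => ?_
  simp only [Set.mem_insert_iff, Set.mem_singleton_iff]
  omega

end DominationRatio

section Periodic

/-- The set of integers congruent modulo `N` to an element of `R`; such sets are the witnesses for
the upper bounds on the domination ratio. -/
def periodicSet (N : ℤ) (R : Finset ℤ) : Set ℤ := {m | ∃ r ∈ R, m ≡ r [ZMOD N]}

theorem card_filter_modEq_Ioc_le {N a b : ℤ} (hN : 0 < N) (hab : a ≤ b) (r : ℤ) :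
    (({x ∈ Finset.Ioc a b | x ≡ r [ZMOD N]}.card : ℕ) : ℝ) ≤ ((b : ℝ) - a) / N + 1 := by
  suffices (({x ∈ Finset.Ioc a b | x ≡ r [ZMOD N]}.card : ℤ) : ℚ) ≤ ((b : ℚ) - a) / N + 1 by
    exact_mod_cast (Rat.cast_le (K := ℝ)).2 this
  have : (0 : ℚ) < N := by exact_mod_cast hN
  have : (0 : ℚ) ≤ b - a := sub_nonneg.2 (by exact_mod_cast hab)
  rw [Int.Ioc_filter_modEq_card _ _ hN]
  push_cast
  refine max_le ?_ (by positivity)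
  have hb := Int.floor_le (((b : ℚ) - r) / N)
  have ha := Int.lt_floor_add_one (((a : ℚ) - r) / N)
  have hsub : ((b : ℚ) - r) / N = (a - r) / N + (b - a) / N := by ring
  linarith

theorem lowerDensity_periodicSet_le {N : ℤ} (hN : 0 < N) (R : Finset ℤ) :
    lowerDensity (periodicSet N R) ≤ R.card / (N : ℝ) := by
  refine lowerDensity_le (C := R.card) fun n => ?_
  let residueClass (r : ℤ) : Finset ℤ := {x ∈ Finset.Ioc (-(n : ℤ) - 1) n | x ≡ r [ZMOD N]}
  have hsub : periodicSet N R ∩ Set.Icc (-(n : ℤ)) n ⊆ (R.biUnion residueClass : Finset ℤ) := by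
    rintro x ⟨⟨r, hr, hx⟩, hx1, hx2⟩
    simp only [Finset.coe_biUnion, Set.mem_iUnion, Finset.mem_coe, residueClass,
      Finset.mem_filter, Finset.mem_Ioc, exists_prop]
    exact ⟨r, hr, by omega, hx⟩
  have hcard := Set.ncard_le_ncard hsub (Finset.finite_toSet _)
  rw [Set.ncard_coe_finset] at hcard
  calc ((periodicSet N R ∩ Set.Icc (-(n : ℤ)) n).ncard : ℝ)
      ≤ ∑ r ∈ R, ((residueClass r).card : ℝ) := by
        exact_mod_cast hcard.trans Finset.card_biUnion_le
    _ ≤ ∑ _r ∈ R, ((2 * (n : ℝ) + 1) / N + 1) := Finset.sum_le_sum fun r _ =>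
        (card_filter_modEq_Ioc_le hN (by omega) r).trans_eq (by push_cast; ring)
    _ = R.card / N * (2 * n + 1) + R.card := by
        rw [Finset.sum_const, nsmul_eq_mul]
        ring

theorem dominating_periodicSet {S : Set ℤ} {N : ℤ} (hN : 0 < N) {R : Finset ℤ}
    (h : ∀ m, 0 ≤ m → m < N → ∃ t ∈ insert 0 S, m - t ∈ R ∨ m + N - t ∈ R) :
    Dominating S (periodicSet N R) := dominating_iff.2 fun m => by
  obtain ⟨t, ht, hr⟩ := h (m % N) (Int.emod_nonneg _ hN.ne') (Int.emod_lt_of_pos _ hN)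
  have hm : m - t ≡ m % N - t [ZMOD N] := (Int.mod_modEq m N).symm.sub_right t
  have hmN : m % N - t ≡ m % N + N - t [ZMOD N] := by simp [Int.ModEq, add_sub_right_comm]
  refine ⟨m - t, ?_, by rwa [sub_sub_cancel]⟩
  exact hr.elim (fun hr => ⟨_, hr, hm⟩) fun hr => ⟨_, hr, hm.trans hmN⟩

theorem dominationRatio_le_card_div {S : Set ℤ} {N : ℤ} (hN : 0 < N) {R : Finset ℤ}
    (h : ∀ m, 0 ≤ m → m < N → ∃ t ∈ insert 0 S, m - t ∈ R ∨ m + N - t ∈ R) :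
    dominationRatio S ≤ R.card / (N : ℝ) :=
  dominationRatio_le (dominating_periodicSet hN h) (lowerDensity_periodicSet_le hN R)

end Periodic

section UpperBound

/-- The progression `a, a + 4, …, a + 4 * (l - 1)`. Its elements `u` dominate the disjoint
blocks `{u, u + 1, u + 2}`, which leave single gaps to be filled by the shift `s`. -/
noncomputable def progression (a l : ℤ) : Finset ℤ := (Finset.Ico 0 l).image (a + 4 * ·)

theorem mem_progression {a l m : ℤ} :
    m ∈ progression a l ↔ a ≤ m ∧ m < a + 4 * l ∧ (m - a) % 4 = 0 := by
  simp only [progression, Finset.mem_image, Finset.mem_Ico]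
  exact ⟨by rintro ⟨j, hj, rfl⟩; omega, fun h => ⟨(m - a) / 4, by omega, by omega⟩⟩

theorem cast_card_progression (a : ℤ) {l : ℤ} (hl : 0 ≤ l) :
    ((progression a l).card : ℝ) = l := by
  rw [progression, Finset.card_image_of_injective _ fun i j h => by simpa using h, Int.card_Ico,
    sub_zero]
  exact_mod_cast Int.toNat_of_nonneg hl

theorem dominationRatio_le_of_le_four_mul_add_two {k s : ℤ} (h1 : 4 * k + 1 ≤ s)
    (h2 : s ≤ 4 * k + 2) (hk : 0 ≤ k) :
    dominationRatio {1, 2, s} ≤ ((k : ℝ) + 1) / (s + 1) := by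
  have h := dominationRatio_le_card_div (S := {1, 2, s}) (N := s + 1) (R := progression 0 (k + 1))
    (by omega) fun m hm0 hm1 => by
      simp only [Set.mem_insert_iff, Set.mem_singleton_iff, exists_eq_or_imp, exists_eq_left,
        mem_progression]
      omega
  rw [cast_card_progression 0 (by omega)] at h
  exact_mod_cast h

theorem dominationRatio_four_mul_le {k : ℤ} (hk : 1 ≤ k) :
    dominationRatio {1, 2, 4 * k} ≤ (k : ℝ) / (4 * k - 1) := by
  have h := dominationRatio_le_card_div (S := {1, 2, 4 * k}) (N := 8 * k - 2)
    (R := progression 0 k ∪ progression (4 * k + 1) k) (by omega) fun m hm0 hm1 => by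
      simp only [Set.mem_insert_iff, Set.mem_singleton_iff, Finset.mem_union, mem_progression]
      rcases lt_or_ge m (4 * k) with hm | hm
      · by_cases hmod : m % 4 = 3
        · exact ⟨4 * k, by omega, .inr <| .inr <| by omega⟩
        · exact ⟨m % 4, by omega, .inl <| .inl <| by omega⟩
      · by_cases hmod : m % 4 = 0
        · exact ⟨4 * k, by omega, .inl <| .inl <| by omega⟩
        · exact ⟨m % 4 - 1, by omega, .inl <| .inr <| by omega⟩
  have hcard : ((progression 0 k ∪ progression (4 * k + 1) k).card : ℝ) ≤ k + k :=
    calc ((progression 0 k ∪ progression (4 * k + 1) k).card : ℝ)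
        ≤ (progression 0 k).card + (progression (4 * k + 1) k).card := by
          exact_mod_cast Finset.card_union_le _ _
      _ = k + k := by
          rw [cast_card_progression _ (by omega), cast_card_progression _ (by omega)]
  have hk' : (1 : ℝ) ≤ k := by exact_mod_cast hk
  calc dominationRatio {1, 2, 4 * k} ≤ _ := h
    _ ≤ (k + k : ℝ) / (8 * k - 2 : ℤ) := by
        refine div_le_div_of_nonneg_right hcard ?_
        exact_mod_cast (by omega : 0 ≤ 8 * k - 2)
    _ = k / (4 * k - 1) := by
        push_cast
        rw [div_eq_div_iff (by linarith) (by linarith)]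
        ring

end UpperBound

section Counting

variable {D : Set ℤ} {a b c n : ℤ}

theorem ncard_inter_Ico_add_ncard_inter_Ico (hab : a ≤ b) (hbc : b ≤ c) :
    (D ∩ Set.Ico a b).ncard + (D ∩ Set.Ico b c).ncard = (D ∩ Set.Ico a c).ncard := by
  rw [← Set.ncard_union_eq
    (Set.Ico_disjoint_Ico_same.mono Set.inter_subset_right Set.inter_subset_right),
    ← Set.inter_union_distrib_left, Set.Ico_union_Ico_eq_Ico hab hbc]

/-- The counting function of a set of integers, normalised to vanish at `0`; at a negative `n` it is
minus the number of elements in `[n, 0)`. -/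
noncomputable def counting (D : Set ℤ) (n : ℤ) : ℤ :=
  (D ∩ Set.Ico 0 n).ncard - (D ∩ Set.Ico n 0).ncard

theorem counting_sub_counting (hab : a ≤ b) :
    counting D b - counting D a = (D ∩ Set.Ico a b).ncard := by
  simp only [counting]
  rcases le_total 0 a with ha | ha
  · have := ncard_inter_Ico_add_ncard_inter_Ico (D := D) ha hab
    rw [Set.Ico_eq_empty_of_le ha, Set.Ico_eq_empty_of_le (ha.trans hab)]
    omega
  rcases le_total 0 b with hb | hb
  · have := ncard_inter_Ico_add_ncard_inter_Ico (D := D) ha hb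
    rw [Set.Ico_eq_empty_of_le ha, Set.Ico_eq_empty_of_le hb]
    simp only [Set.inter_empty, Set.ncard_empty]
    omega
  · have := ncard_inter_Ico_add_ncard_inter_Ico (D := D) hab hb
    rw [Set.Ico_eq_empty_of_le ha, Set.Ico_eq_empty_of_le hb]
    simp only [Set.inter_empty, Set.ncard_empty]
    omega

/-- The indicator function of a set of integers, with values in `ℤ` so that memberships add up. -/
noncomputable def ind (D : Set ℤ) : ℤ → ℤ := D.indicator 1

theorem ind_nonneg (D : Set ℤ) (n : ℤ) : 0 ≤ ind D n :=
  Set.indicator_nonneg (fun _ _ => zero_le_one) n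

theorem ind_le_one (D : Set ℤ) (n : ℤ) : ind D n ≤ 1 :=
  Set.indicator_le_self' (fun _ _ => zero_le_one) n

theorem ind_eq_one (hn : n ∈ D) : ind D n = 1 := Set.indicator_of_mem hn 1

theorem counting_add_one (D : Set ℤ) (n : ℤ) : counting D (n + 1) = counting D n + ind D n := by
  have h := counting_sub_counting (D := D) (Int.le_add_one (le_refl n))
  rw [Set.Ico_add_one_right_eq_Icc, Set.Icc_self] at h
  by_cases hn : n ∈ D
  · rw [Set.inter_singleton_of_mem hn, Set.ncard_singleton] at h
    rw [ind_eq_one hn]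
    omega
  · rw [Set.inter_singleton_eq_empty.2 hn, Set.ncard_empty] at h
    rw [ind, Set.indicator_of_notMem hn]
    omega

theorem counting_monotone (D : Set ℤ) : Monotone (counting D) :=
  monotone_int_of_le_succ fun n => by
    rw [counting_add_one]
    exact le_add_of_nonneg_right (ind_nonneg D n)

theorem counting_add_le (D : Set ℤ) (n : ℤ) (L : ℕ) : counting D (n + L) ≤ counting D n + L := by
  induction L with
  | zero => simp
  | succ L ih =>
    have := ind_le_one D (n + L)
    rw [Nat.cast_succ, ← add_assoc, counting_add_one]
    omega

end Counting

section Averaging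

/-- How many more than `q` elements of `D` the window `[n, n + L)` contains. -/
noncomputable def surplus (L q : ℤ) (D : Set ℤ) (n : ℤ) : ℤ :=
  counting D (n + L) - counting D n - q

theorem surplus_add_one (L q : ℤ) (D : Set ℤ) (n : ℤ) :
    surplus L q D (n + 1) = surplus L q D n + ind D (n + L) - ind D n := by
  have := counting_add_one D n
  have := counting_add_one D (n + L)
  simp only [surplus]
  rw [add_right_comm]
  omega

/-- What remains of the positive part of `f` at `n - t` once it has paid for the negative part of
`f` at `n`. -/
def balance (t : ℤ) (f : ℤ → ℤ) (n : ℤ) : ℤ := max (f (n - t)) 0 - max (-f n) 0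

theorem sum_range_shift_sub {G : Type*} [AddCommGroup G] (f : ℤ → G) (a : ℤ) (N L : ℕ) :
    ∑ i ∈ Finset.range N, (f (a + i + L) - f (a + i)) =
      ∑ i ∈ Finset.range L, (f (a + N + i) - f (a + i)) := by
  induction N with
  | zero => simp
  | succ N ih =>
    have h := Finset.sum_range_sub (fun i : ℕ => f (a + N + i)) L
    rw [Nat.cast_zero, add_zero] at h
    rw [Finset.sum_range_succ, ih, ← h, ← Finset.sum_add_distrib]
    refine Finset.sum_congr rfl fun i _ => ?_
    push_cast
    rw [show a + ((N : ℤ) + 1) + i = a + N + (i + 1) by ring]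
    abel

theorem sum_balance_le {f : ℤ → ℤ} {B : ℤ} (hB : ∀ n, max (f n) 0 ≤ B) (t : ℕ) (a : ℤ) (N : ℕ) :
    ∑ i ∈ Finset.range N, balance t f (a + i) ≤ ∑ i ∈ Finset.range N, f (a + i) + t * B := by
  have hshift := sum_range_shift_sub (fun n => max (f n) 0) (a - t) N t
  have hpaid : ∑ i ∈ Finset.range N, f (a + i) = ∑ i ∈ Finset.range N, balance t f (a + i) +
      ∑ i ∈ Finset.range t, (max (f (a - t + N + i)) 0 - max (f (a - t + i)) 0) := by
    rw [← hshift, ← Finset.sum_add_distrib]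
    refine Finset.sum_congr rfl fun i _ => ?_
    rw [balance, show a - t + i + t = a + (i : ℤ) by ring, show a + i - t = a - t + (i : ℤ) by ring]
    omega
  have hbound : ∑ _i ∈ Finset.range t, -B ≤
      ∑ i ∈ Finset.range t, (max (f (a - t + N + i)) 0 - max (f (a - t + i)) 0) :=
    Finset.sum_le_sum fun i _ => by
      have := hB (a - t + i)
      omega
  rw [Finset.sum_const, Finset.card_range, nsmul_eq_mul] at hbound
  linarith

theorem sum_surplus_le (D : Set ℤ) (L : ℕ) (q a : ℤ) (N : ℕ) :
    ∑ i ∈ Finset.range N, surplus L q D (a + i) ≤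
      L * (counting D (a + N) - counting D a + L) - N * q := by
  have hwindow : ∑ i ∈ Finset.range N, surplus L q D (a + i) =
      ∑ i ∈ Finset.range L, (counting D (a + N + i) - counting D (a + i)) - N * q := by
    rw [← sum_range_shift_sub]
    simp [surplus, Finset.sum_sub_distrib]
  have hbound : ∑ i ∈ Finset.range L, (counting D (a + N + i) - counting D (a + i)) ≤
      ∑ _i ∈ Finset.range L, (counting D (a + N) - counting D a + L) :=
    Finset.sum_le_sum fun i hi => by
      have := Finset.mem_range.1 hi
      have := counting_add_le D (a + N) i
      have := counting_monotone D (show a ≤ a + i by omega)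
      omega
  rw [Finset.sum_const, Finset.card_range, nsmul_eq_mul] at hbound
  linarith

theorem div_le_lowerDensity_of_le_sum_balance {D : Set ℤ} {t L q c : ℤ} (ht : 0 ≤ t) (hL : 0 < L)
    (h : ∀ (a : ℤ) (N : ℕ), c ≤ ∑ i ∈ Finset.range N, balance t (surplus L q D) (a + i)) :
    (q : ℝ) / L ≤ lowerDensity D := by
  lift t to ℕ using ht
  lift L to ℕ using hL.le
  have hL' : (0 : ℝ) < (L : ℤ) := by exact_mod_cast hL
  have hB (n : ℤ) : max (surplus L q D n) 0 ≤ L + |q| := by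
    have := counting_add_le D n L
    have := neg_abs_le q
    have := abs_nonneg q
    rw [surplus]
    omega
  refine le_lowerDensity (C := (L ^ 2 + t * (L + |q|) - c : ℤ) / (L : ℤ)) fun n => ?_
  have hcard : counting D (-n + (2 * n + 1 : ℕ)) - counting D (-n) =
      (D ∩ Set.Icc (-(n : ℤ)) n).ncard := by
    rw [counting_sub_counting (by omega), show -(n : ℤ) + (2 * n + 1 : ℕ) = n + 1 by omega,
      Set.Ico_add_one_right_eq_Icc]
  have hmul : q * (2 * n + 1) ≤
      (D ∩ Set.Icc (-(n : ℤ)) n).ncard * L + (L ^ 2 + t * (L + |q|) - c) := by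
    have h1 := h (-n) (2 * n + 1)
    have h2 := sum_balance_le hB t (-n) (2 * n + 1)
    have h3 := sum_surplus_le D L q (-n) (2 * n + 1)
    rw [hcard] at h3
    push_cast at h3
    linarith
  rw [div_mul_eq_mul_div, div_le_iff₀ hL', add_mul, div_mul_cancel₀ _ hL'.ne']
  exact_mod_cast hmul

theorem neg_one_le_sum_range {φ : ℤ → ℤ} (h1 : ∀ n, -1 ≤ φ n)
    (h2 : ∀ n n', n < n' → φ n < 0 → φ n' < 0 → ∃ m, n < m ∧ m < n' ∧ φ m ≠ 0)
    (a : ℤ) (N : ℕ) : -1 ≤ ∑ i ∈ Finset.range N, φ (a + i) := by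
  suffices -1 ≤ ∑ i ∈ Finset.range N, φ (a + i) ∧ (∑ i ∈ Finset.range N, φ (a + i) = -1 →
      ∃ n < a + N, φ n < 0 ∧ ∀ m, n < m → m < a + N → φ m = 0) from this.1
  induction N with
  | zero => simp
  | succ N ih =>
    obtain ⟨hsum, hlast⟩ := ih
    rw [Finset.sum_range_succ]
    push_cast
    have hN := h1 (a + N)
    rcases lt_trichotomy (φ (a + N)) 0 with hneg | hzero | hpos
    · have hne : ∑ i ∈ Finset.range N, φ (a + i) ≠ -1 := fun heq => by
        obtain ⟨n, hn, hφ, hgap⟩ := hlast heq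
        obtain ⟨m, hm1, hm2, hm⟩ := h2 n _ hn hφ hneg
        exact hm (hgap m hm1 hm2)
      exact ⟨by omega, fun _ => ⟨a + N, by omega, hneg, fun m _ _ => by omega⟩⟩
    · refine ⟨by omega, fun heq => ?_⟩
      obtain ⟨n, hn, hφ, hgap⟩ := hlast (by omega)
      refine ⟨n, by omega, hφ, fun m hm1 hm2 => ?_⟩
      rcases eq_or_ne m (a + N) with rfl | hm
      · exact hzero
      · exact hgap m hm1 (by omega)
    · exact ⟨by omega, by omega⟩

end Averaging

section Excess

variable {s k : ℤ} {D : Set ℤ}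

/-- The number of times `n` is dominated by `D` in `Γ(ℤ,{1,2,s})`, minus one. -/
noncomputable def excess (s : ℤ) (D : Set ℤ) (n : ℤ) : ℤ :=
  ind D n + ind D (n - 1) + ind D (n - 2) + ind D (n - s) - 1

theorem Dominating.excess_nonneg (hD : Dominating {1, 2, s} D) (n : ℤ) : 0 ≤ excess s D n := by
  have h0 := ind_nonneg D n
  have h1 := ind_nonneg D (n - 1)
  have h2 := ind_nonneg D (n - 2)
  have h3 := ind_nonneg D (n - s)
  rw [excess]
  rcases hD n with hn | ⟨u, hu, t, rfl | rfl | rfl, rfl⟩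
  · linarith [ind_eq_one hn]
  all_goals
    rw [add_sub_cancel_right] at *
    linarith [ind_eq_one hu]

/-- A primitive of `excess s D`. -/
noncomputable def cumExcess (s : ℤ) (D : Set ℤ) (n : ℤ) : ℤ :=
  counting D n + counting D (n - 1) + counting D (n - 2) + counting D (n - s) - n

theorem cumExcess_add_one (s : ℤ) (D : Set ℤ) (n : ℤ) :
    cumExcess s D (n + 1) = cumExcess s D n + excess s D n := by
  have h := counting_add_one D
  grind [cumExcess, excess]

theorem Dominating.cumExcess_monotone (hD : Dominating {1, 2, s} D) : Monotone (cumExcess s D) :=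
  monotone_int_of_le_succ fun n => by
    rw [cumExcess_add_one]
    exact le_add_of_nonneg_right (hD.excess_nonneg n)

theorem Dominating.excess_le {a b i : ℤ} (hD : Dominating {1, 2, s} D) (ha : a ≤ i) (hb : i < b) :
    excess s D i ≤ cumExcess s D b - cumExcess s D a := by
  have h1 := hD.cumExcess_monotone ha
  have h2 := hD.cumExcess_monotone (show i + 1 ≤ b from hb)
  rw [cumExcess_add_one] at h2
  omega

/-- The loss in estimating `D` on the windows of length `L` at `n` and `n - s` from the fact that it
dominates `[n + 2, n + L)`: elements near the ends of the windows, and multiple domination. -/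
noncomputable def slack (s L : ℤ) (D : Set ℤ) (n : ℤ) : ℤ :=
  2 * ind D n + ind D (n + 1) + ind D (n + L - 2) + 2 * ind D (n + L - 1) +
    ind D (n - s) + ind D (n - s + 1) + (cumExcess s D (n + L) - cumExcess s D (n + 2))

theorem three_mul_surplus_add_surplus (s L q : ℤ) (D : Set ℤ) (n : ℤ) :
    3 * surplus L q D n + surplus L q D (n - s) = L - 2 - 4 * q + slack s L D n := by
  have h := counting_add_one D
  grind [surplus, slack, cumExcess]

/-- Otherwise `n - 1` and `n + s - 2` both belong to `D` and both dominate `n + s - 1`. -/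
theorem Dominating.one_le_slack (hD : Dominating {1, 2, s} D) (hs : 4 ≤ s) (n : ℤ) :
    1 ≤ slack s (s + 1) D n := by
  by_contra! hlt
  have hx := ind_nonneg D
  have hdouble := hD.excess_le (show n + 2 ≤ n + s - 1 by omega)
    (show n + s - 1 < n + (s + 1) by omega)
  have h1 := hD.excess_nonneg (n + 1)
  have hs1 := hD.excess_nonneg (n + s - 1)
  have hs0 := hD.excess_nonneg (n + s)
  have : 1 ≤ ind D (n - 1) := by grind [slack, excess]
  have : 1 ≤ ind D (n + s - 2) := by grind [slack, excess]
  grind [slack, excess]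

theorem balance_nonneg_of_four_mul (hD : Dominating {1, 2, 4 * k} D) (hk : 1 ≤ k) (n : ℤ) :
    0 ≤ balance (4 * k - 1) (surplus (4 * k - 1) k D) n := by
  have hpair := three_mul_surplus_add_surplus (4 * k) (4 * k - 1) k D n
  have hstep := surplus_add_one (4 * k - 1) k D (n - 4 * k)
  have hx := ind_nonneg D
  have := hD.cumExcess_monotone (show n + 2 ≤ n + (4 * k - 1) by omega)
  have := hD.excess_nonneg (n + 1)
  grind [slack, excess, balance]

theorem balance_nonneg_of_four_mul_add_two (hD : Dominating {1, 2, 4 * k + 2} D) (hk : 1 ≤ k)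
    (n : ℤ) : 0 ≤ balance (4 * k + 2) (surplus (4 * k + 2 + 1) (k + 1) D) n := by
  have hslack := hD.one_le_slack (by omega) n
  have hpair := three_mul_surplus_add_surplus (4 * k + 2) (4 * k + 2 + 1) (k + 1) D n
  rw [balance]
  omega

end Excess

section Tight

variable {s k n : ℤ} {D : Set ℤ}

/-- The pattern of `D` around `n` forced by a deficient window of length `s + 1` at `n` when
`s = 4 * k + 1`; see `Dominating.isTight_of_slack_eq_one`. -/
structure IsTight (s : ℤ) (D : Set ℤ) (n : ℤ) : Prop where
  ind_sub_s : ind D (n - s) = 0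
  ind_sub_s_add_one : ind D (n - s + 1) = 0
  ind_sub_one : ind D (n - 1) = 1
  ind_self : ind D n = 0
  ind_add_one : ind D (n + 1) = 0
  ind_add_s_sub_two : ind D (n + s - 2) = 1
  ind_add_s_sub_one : ind D (n + s - 1) = 0
  ind_add_s : ind D (n + s) = 0
  excess_eq_zero : ∀ i, n + 2 ≤ i → i ≤ n + s → i ≠ n + s - 1 → excess s D i = 0

theorem Dominating.isTight_of_slack_eq_one (hD : Dominating {1, 2, s} D) (hs : 5 ≤ s)
    (h : slack s (s + 1) D n = 1) : IsTight s D n := by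
  have hx := ind_nonneg D
  have hx1 := ind_le_one D
  have hmono := hD.cumExcess_monotone (show n + 2 ≤ n + s - 2 by omega)
  have hsum := cumExcess_add_one s D
  have h0 := hD.excess_nonneg n
  have h1 := hD.excess_nonneg (n + 1)
  have hs2 := hD.excess_nonneg (n + s - 2)
  have hs1 := hD.excess_nonneg (n + s - 1)
  have hs0 := hD.excess_nonneg (n + s)
  have hdouble : cumExcess s D (n + (s + 1)) - cumExcess s D (n + 2) = excess s D (n + s - 1) := by
    grind [slack, excess]
  refine ⟨?_, ?_, ?_, ?_, ?_, ?_, ?_, ?_, fun i hi1 hi2 hi => ?_⟩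
  iterate 8 grind [slack, excess]
  have := hD.excess_nonneg i
  rcases lt_or_gt_of_ne hi with hlt | hgt
  · have := hD.excess_le hi1 hlt
    grind
  · obtain rfl : i = n + s := by omega
    grind

theorem Dominating.of_balance_neg (hD : Dominating {1, 2, s} D) (hs : s = 4 * k + 1) (hk : 1 ≤ k)
    (hn : balance s (surplus (s + 1) (k + 1) D) n < 0) :
    surplus (s + 1) (k + 1) D n = -1 ∧ surplus (s + 1) (k + 1) D (n - s) = 0 ∧ IsTight s D n := by
  have hslack := hD.one_le_slack (by omega) n
  have hpair := three_mul_surplus_add_surplus s (s + 1) (k + 1) D n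
  rw [balance] at hn
  exact ⟨by omega, by omega, hD.isTight_of_slack_eq_one (by omega) (by omega)⟩

theorem Dominating.neg_one_le_balance (hD : Dominating {1, 2, s} D) (hs : s = 4 * k + 1)
    (hk : 1 ≤ k) (n : ℤ) : -1 ≤ balance s (surplus (s + 1) (k + 1) D) n := by
  by_contra! hlt
  have := hD.of_balance_neg hs hk (n := n) (by omega)
  rw [balance] at hlt
  omega

/-- Distinct elements of `D ∩ [a, b)` differ by at least `3`. -/
def SeparatedOn (D : Set ℤ) (a b : ℤ) : Prop :=
  ∀ u v, a ≤ u → u < v → v ≤ u + 2 → v < b → ind D u + ind D v ≤ 1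

theorem IsTight.separatedOn (h : IsTight s D n) : SeparatedOn D (n - 1) (n + s + 1) := by
  intro u v hu huv hvu hv
  have hx := ind_nonneg D
  have hx1 := ind_le_one D
  obtain rfl | rfl | rfl | hv2 :
      v = n ∨ v = n + 1 ∨ v = n + s - 1 ∨ (n + 2 ≤ v ∧ v ≠ n + s - 1) := by omega
  · grind [h.ind_self]
  · grind [h.ind_add_one]
  · grind [h.ind_add_s_sub_one]
  · have := h.excess_eq_zero v hv2.1 (by omega) hv2.2
    obtain rfl | rfl : u = v - 1 ∨ u = v - 2 := by omega
    all_goals grind [excess]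

theorem SeparatedOn.of_periodic {p a b : ℤ} (hp : 0 < p)
    (hper : ∀ i, a ≤ i → i + p < b → ind D (i + p) = ind D i)
    (h : SeparatedOn D a (min (a + p + 2) b)) : SeparatedOn D a b := by
  intro u v hu huv hvu hv
  induction hN : (v - a).toNat using Nat.strong_induction_on generalizing u v with
  | _ N ih =>
    rcases lt_or_ge v (a + p + 2) with hvp | hvp
    · exact h u v hu huv hvu (lt_min hvp hv)
    · have hshift := ih (v - p - a).toNat (by omega) (u - p) (v - p) (by omega) (by omega)
        (by omega) (by omega) rfl
      rwa [← hper (u - p) (by omega) (by omega), ← hper (v - p) (by omega) (by omega),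
        sub_add_cancel, sub_add_cancel] at hshift

theorem SeparatedOn.mono {a b a' b' : ℤ} (h : SeparatedOn D a b) (ha : a ≤ a') (hb : b' ≤ b) :
    SeparatedOn D a' b' :=
  fun u v hu huv hvu hv => h u v (ha.trans hu) huv hvu (hv.trans_le hb)

theorem IsTight.separatedOn_of_surplus_eq_zero {p q : ℤ} (h : IsTight s D n) (hs : 0 ≤ s)
    (h2 : ind D (n + 2) = 0) (hzero : ∀ z, n < z → z < p - s → surplus (s + 1) q D z = 0) :
    SeparatedOn D (n + 1) p := by
  have hx1 := ind_le_one D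
  have hper : ∀ i, n + 1 ≤ i → i + (s + 1) < p → ind D (i + (s + 1)) = ind D i := by
    intro i hi hip
    have hstep := surplus_add_one (s + 1) q D i
    rw [hzero i (by omega) (by omega), hzero (i + 1) (by omega) (by omega)] at hstep
    omega
  refine SeparatedOn.of_periodic (by omega) hper fun u v hu huv hvu hv => ?_
  rcases lt_or_ge v (n + s + 1) with hvs | hvs
  · exact h.separatedOn u v (by omega) huv hvu hvs
  have hper1 := hper (n + 1) le_rfl
  have hper2 := hper (n + 2) (by omega)
  have hv3 : v = n + s + 1 ∨ v = n + 1 + (s + 1) ∨ v = n + 2 + (s + 1) := by omega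
  clear hper hzero
  obtain rfl | rfl | rfl := hv3
  · obtain rfl | rfl : u = n + s - 1 ∨ u = n + s := by omega
    · grind [h.ind_add_s_sub_one]
    · grind [h.ind_add_s]
  · grind [h.ind_add_one]
  · grind

end Tight

section Gap

variable {s k q n p : ℤ} {D : Set ℤ}

theorem IsTight.surplus_nonneg (hD : Dominating {1, 2, s} D) (h : IsTight s D n)
    (hf : surplus (s + 1) q D n = -1) :
    0 ≤ surplus (s + 1) q D (n + 1) ∧ 0 ≤ surplus (s + 1) q D (n + 2) := by
  have hx := ind_nonneg D (n + s + 2)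
  have : ind D (n + s + 1) = 1 := by
    have := hD.excess_nonneg (n + s + 1)
    have := ind_le_one D (n + s + 1)
    grind [excess, h.ind_add_one, h.ind_add_s_sub_one, h.ind_add_s]
  have hstep0 := surplus_add_one (s + 1) q D n
  have hstep1 := surplus_add_one (s + 1) q D (n + 1)
  grind [h.ind_self, h.ind_add_one]

theorem IsTight.ind_add_two_eq_zero (h : IsTight s D n) (hf : surplus (s + 1) q D (n - s) = 0)
    (hf2 : 0 ≤ surplus (s + 1) q D (n + 2))
    (hbal : balance s (surplus (s + 1) q D) (n + 2) = 0) : ind D (n + 2) = 0 := by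
  have hx := ind_nonneg D (n + 2)
  have hstep0 := surplus_add_one (s + 1) q D (n - s)
  have hstep1 := surplus_add_one (s + 1) q D (n - s + 1)
  grind [balance, h.ind_sub_s, h.ind_sub_s_add_one, h.ind_add_one]

theorem IsTight.surplus_sub_three (h : IsTight s D p) (hsep : SeparatedOn D (p - 3) p) :
    surplus (s + 1) q D (p - 3) = surplus (s + 1) q D p := by
  have hx := ind_nonneg D
  have hstep := surplus_add_one (s + 1) q D
  have h1 := hsep (p - 3) (p - 1) (by omega) (by omega) (by omega) (by omega)
  have h2 := hsep (p - 2) (p - 1) (by omega) (by omega) (by omega) (by omega)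
  grind [h.ind_sub_one, h.ind_add_s_sub_two, h.ind_add_s_sub_one, h.ind_add_s]

theorem eq_zero_of_balance_eq_zero {f : ℤ → ℤ} (hs : 0 ≤ s)
    (hf : ∀ z, n < z → z < p → 0 ≤ f z) (hbal : ∀ z, n < z → z < p → balance s f z = 0) :
    ∀ z, n < z → z < p - s → f z = 0 := by
  intro z hz hzp
  have hz0 := hf z hz (by omega)
  have hzs := hf (z + s) (by omega) (by omega)
  have := hbal (z + s) (by omega) (by omega)
  rw [balance, add_sub_cancel_right] at this
  omega

theorem of_balance_eq_zero_of_surplus_neg (hprev : 0 ≤ surplus (s + 1) q D (p - 1))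
    (hneg : surplus (s + 1) q D p < 0) (hbal : balance s (surplus (s + 1) q D) p = 0)
    (hbal' : balance s (surplus (s + 1) q D) (p - 1) = 0) :
    surplus (s + 1) q D p = -1 ∧ surplus (s + 1) q D (p - s) = 1 ∧
      ind D (p - 1) = 1 ∧ ind D p = 1 := by
  have hx := ind_nonneg D
  have hx1 := ind_le_one D
  have hstep := surplus_add_one (s + 1) q D (p - 1)
  have hstep' := surplus_add_one (s + 1) q D (p - s - 1)
  grind [balance]

theorem counting_add_four_le {i : ℤ} (hsep : SeparatedOn D i (i + 4))
    (h0 : excess s D (i + s) = 0) (h1 : excess s D (i + s + 1) = 0)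
    (h3 : excess s D (i + s + 3) = 0) : counting D (i + 4) ≤ counting D i + 1 := by
  by_contra! hlt
  have hx := ind_nonneg D
  have hx1 := ind_le_one D
  have hcount := counting_add_one D
  have h01 := hsep i (i + 1) (by omega) (by omega) (by omega) (by omega)
  have h02 := hsep i (i + 2) (by omega) (by omega) (by omega) (by omega)
  have h12 := hsep (i + 1) (i + 2) (by omega) (by omega) (by omega) (by omega)
  have h13 := hsep (i + 1) (i + 3) (by omega) (by omega) (by omega) (by omega)
  have h23 := hsep (i + 2) (i + 3) (by omega) (by omega) (by omega) (by omega)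
  have : ind D i = 1 ∧ ind D (i + 1) = 0 ∧ ind D (i + 2) = 0 ∧ ind D (i + 3) = 1 := by grind
  grind [excess]

theorem add_four_mul_le {f : ℤ → ℤ} {a : ℤ} (j : ℕ)
    (h : ∀ i, a ≤ i → i + 4 ≤ a + 4 * j → f (i + 4) ≤ f i + 1) : f (a + 4 * j) ≤ f a + j := by
  induction j with
  | zero => simp
  | succ j ih =>
    have hprev := ih fun i hi hij => h i hi (by omega)
    have hlast := h (a + 4 * j) (by omega) (by omega)
    push_cast
    rw [mul_add_one, ← add_assoc a]
    omega

theorem Dominating.surplus_sub_nonpos (hD : Dominating {1, 2, s} D) (hs : s = 4 * k + 1)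
    (hk : 1 ≤ k) (hslack : slack s (s + 1) D p = 2) (hp : ind D p = 1)
    (hsep : SeparatedOn D (p - s + 1) p) : surplus (s + 1) (k + 1) D (p - s) ≤ 0 := by
  have hx := ind_nonneg D
  have hmono := hD.cumExcess_monotone (show p + 2 ≤ p + (s + 1) by omega)
  have hexcess : ∀ i, p + 2 ≤ i → i ≤ p + s → excess s D i = 0 := by
    intro i hi his
    have := hD.excess_nonneg i
    have := hD.excess_le hi (show i < p + (s + 1) by omega)
    grind [slack]
  have hleft : ind D (p - s) = 0 ∧ ind D (p - s + 1) = 0 ∧ ind D (p - s + 2) = 0 := by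
    have := hexcess (p + 2) le_rfl (by omega)
    grind [slack, excess]
  have hblocks := add_four_mul_le (f := counting D) (a := p - s + 3) (k - 1).toNat fun i hi his =>
    counting_add_four_le (s := s) (hsep.mono (by omega) (by omega))
      (hexcess _ (by omega) (by omega)) (hexcess _ (by omega) (by omega))
      (hexcess _ (by omega) (by omega))
  rw [Int.toNat_of_nonneg (by omega), show p - s + 3 + 4 * (k - 1) = p - 2 by omega] at hblocks
  have hright := hsep (p - 2) (p - 1) (by omega) (by omega) (by omega) (by omega)
  have hcount := counting_add_one D
  grind [surplus]

end Gap

section FourMulAddOne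

variable {s k n n' : ℤ} {D : Set ℤ}

theorem Dominating.exists_balance_ne_zero (hD : Dominating {1, 2, s} D) (hs : s = 4 * k + 1)
    (hk : 1 ≤ k) (hlt : n < n') (hn : balance s (surplus (s + 1) (k + 1) D) n < 0)
    (hn' : balance s (surplus (s + 1) (k + 1) D) n' < 0) :
    ∃ m, n < m ∧ m < n' ∧ balance s (surplus (s + 1) (k + 1) D) m ≠ 0 := by
  by_contra! hbal
  obtain ⟨hfn, hfns, htight⟩ := hD.of_balance_neg hs hk hn
  obtain ⟨hfn', -, htight'⟩ := hD.of_balance_neg hs hk hn'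
  obtain ⟨hf1, hf2⟩ := htight.surplus_nonneg hD hfn
  obtain ⟨p, ⟨hnp, hneg⟩, hfirst⟩ := Int.exists_least_of_bdd
    (P := fun z => n < z ∧ surplus (s + 1) (k + 1) D z < 0) ⟨n, fun z hz => hz.1.le⟩
    ⟨n', hlt, by omega⟩
  have hpn' : p ≤ n' := hfirst n' ⟨hlt, by omega⟩
  have hpos : ∀ z, n < z → z < p → 0 ≤ surplus (s + 1) (k + 1) D z := fun z hz hzp =>
    not_lt.1 fun hz0 => hzp.not_ge (hfirst z ⟨hz, hz0⟩)
  have hp3 : n + 3 ≤ p := by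
    have : p ≠ n + 1 := fun h => (h ▸ hneg).not_ge hf1
    have : p ≠ n + 2 := fun h => (h ▸ hneg).not_ge hf2
    omega
  have hind2 := htight.ind_add_two_eq_zero hfns hf2 (hbal _ (by omega) (by omega))
  have hzero := eq_zero_of_balance_eq_zero (by omega) hpos fun z hz hzp => hbal z hz (by omega)
  have hsep := htight.separatedOn_of_surplus_eq_zero (by omega) hind2 hzero
  rcases hpn'.eq_or_lt with rfl | hpn'
  · have hp4 : p ≠ n + 3 := by
      rintro rfl
      grind [htight'.ind_sub_one]
    have hearlier := htight'.surplus_sub_three (q := k + 1) (hsep.mono (by omega) le_rfl)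
    exact (hpos (p - 3) (by omega) (by omega)).not_gt (hearlier ▸ hneg)
  · obtain ⟨hfp, hfps, hind1, hind⟩ := of_balance_eq_zero_of_surplus_neg
      (hpos _ (by omega) (by omega)) hneg (hbal p hnp hpn') (hbal _ (by omega) (by omega))
    have hps : n + s + 1 ≤ p := by
      by_contra! hps
      have := htight.separatedOn (p - 1) p (by omega) (by omega) (by omega) hps
      omega
    have hpair := three_mul_surplus_add_surplus s (s + 1) (k + 1) D p
    have hle := hD.surplus_sub_nonpos hs hk (by omega) hind (hsep.mono (by omega) le_rfl)
    omega

end FourMulAddOne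

section Values

variable {k : ℤ}

theorem dominationRatio_four_mul (hk : 1 ≤ k) :
    dominationRatio {1, 2, 4 * k} = (k : ℝ) / (4 * k - 1) := by
  refine le_antisymm (dominationRatio_four_mul_le hk) (le_dominationRatio fun D hD => ?_)
  have h := div_le_lowerDensity_of_le_sum_balance (t := 4 * k - 1) (L := 4 * k - 1) (by omega)
    (by omega) fun a N => Finset.sum_nonneg fun i _ => balance_nonneg_of_four_mul hD hk (a + i)
  exact_mod_cast h

theorem dominationRatio_four_mul_add_one (hk : 1 ≤ k) :
    dominationRatio {1, 2, 4 * k + 1} = ((k : ℝ) + 1) / (4 * k + 2) := by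
  refine le_antisymm ?_ (le_dominationRatio fun D hD => ?_)
  · have h := dominationRatio_le_of_le_four_mul_add_two (k := k) le_rfl (by omega) (by omega)
    push_cast at h
    rwa [add_assoc, one_add_one_eq_two] at h
  · have h := div_le_lowerDensity_of_le_sum_balance (by omega) (by omega)
      (neg_one_le_sum_range (hD.neg_one_le_balance rfl hk) fun _ _ hlt hn hn' =>
        hD.exists_balance_ne_zero rfl hk hlt hn hn')
    push_cast at h
    rwa [add_assoc, one_add_one_eq_two] at h

theorem dominationRatio_four_mul_add_two (hk : 1 ≤ k) :
    dominationRatio {1, 2, 4 * k + 2} = ((k : ℝ) + 1) / (4 * k + 3) := by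
  refine le_antisymm ?_ (le_dominationRatio fun D hD => ?_)
  · have h := dominationRatio_le_of_le_four_mul_add_two (k := k) (by omega) le_rfl (by omega)
    push_cast at h
    rwa [add_assoc, two_add_one_eq_three] at h
  · have h := div_le_lowerDensity_of_le_sum_balance (by omega) (by omega) fun a N =>
      Finset.sum_nonneg fun i _ => balance_nonneg_of_four_mul_add_two hD hk (a + i)
    push_cast at h
    rwa [add_assoc, two_add_one_eq_three] at h

end Values

theorem stmt_15 (k : ℤ) (hk : 1 ≤ k) :
    (∀ s : ℤ, (s = 4 * k ∨ s = -4 * k + 2) → s ∉ ({0, 1, 2} : Set ℤ) →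
      dominationRatio {1, 2, s} = 2 * (k : ℝ) / (8 * (k : ℝ) - 2)) ∧
    (∀ s : ℤ, (s = 4 * k + 1 ∨ s = -4 * k + 1) →
      dominationRatio {1, 2, s} = ((k : ℝ) + 1) / (4 * (k : ℝ) + 2)) ∧
    (∀ s : ℤ, (s = 4 * k + 2 ∨ s = -4 * k) →
      dominationRatio {1, 2, s} = ((k : ℝ) + 1) / (4 * (k : ℝ) + 3)) := by
  refine ⟨fun s hs _ => ?_, fun s hs => ?_, fun s hs => ?_⟩
  · have hvalue : (k : ℝ) / (4 * k - 1) = 2 * k / (8 * k - 2) := by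
      rw [← mul_div_mul_left _ _ (two_ne_zero' ℝ)]
      ring_nf
    rcases hs with rfl | rfl
    · rw [dominationRatio_four_mul hk, hvalue]
    · rw [show -4 * k + 2 = 2 - 4 * k by ring, dominationRatio_two_sub,
        dominationRatio_four_mul hk, hvalue]
  · rcases hs with rfl | rfl
    · exact dominationRatio_four_mul_add_one hk
    · rw [show -4 * k + 1 = 2 - (4 * k + 1) by ring, dominationRatio_two_sub,
        dominationRatio_four_mul_add_one hk]
  · rcases hs with rfl | rfl
    · exact dominationRatio_four_mul_add_two hk
    · rw [show -4 * k = 2 - (4 * k + 2) by ring, dominationRatio_two_sub,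
        dominationRatio_four_mul_add_two hk]
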